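/- arXiv:1809.06921 — 2 statements merged into one kernel-verified Lean document; each statement's English description precedes it below -/
import Mathlib

section
/- The derivative of the Hurwitz zeta function at s = 0 satisfies ζ'(0,x) = log Γ(x) - (1/2) log(2π) for 0 < x ≤ 1 (Lerch's formula). -/
open HurwitzZeta

/-!
Linear interpolation between consecutive integers `n + 1`, `n + 2` approximates `(n + 1 + x) ^ (-s)`
up to `O(n ^ (-Re s - 2))`. Summing the errors therefore gives a series which converges locally
uniformly on `-1 < Re s`, and which for `1 < Re s` equals `ζ(s, x) - x ^ (-s) - ζ(s) + x`; the
identity persists on the half-plane by analytic continuation. Differentiating at `s = 0` turns the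
series into the logarithm of Euler's product for `Γ(x + 1)`.
-/

open Filter Set Topology

section Interpolation

variable {E : Type*} [NormedAddCommGroup E] [NormedSpace ℝ E] {f f' f'' : ℝ → E} {s : Set ℝ}
  {M : ℝ}

lemma norm_image_sub_sub_smul_deriv_le_of_second_deriv_le (hs : Convex ℝ s)
    (hf : ∀ y ∈ s, HasDerivWithinAt f (f' y) s y)
    (hf' : ∀ y ∈ s, HasDerivWithinAt f' (f'' y) s y) (hM : ∀ y ∈ s, ‖f'' y‖ ≤ M)
    {c y : ℝ} (hc : c ∈ s) (hy : y ∈ s) :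
    ‖f y - f c - (y - c) • f' c‖ ≤ M * ‖y - c‖ ^ 2 := by
  have hseg : segment ℝ c y ⊆ s := hs.segment_subset hc hy
  have hderiv : ∀ z ∈ segment ℝ c y,
      HasDerivWithinAt (fun z ↦ f z - (z - c) • f' c) (f' z - f' c) (segment ℝ c y) z := by
    intro z hz
    have hlin := ((hasDerivWithinAt_id z (segment ℝ c y)).sub_const c).smul_const (f' c)
    simpa only [id, one_smul] using! ((hf z (hseg hz)).mono hseg).sub hlin
  have hbound : ∀ z ∈ segment ℝ c y, ‖f' z - f' c‖ ≤ M * ‖y - c‖ := fun z hz ↦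
    (hs.norm_image_sub_le_of_norm_hasDerivWithin_le hf' hM hc (hseg hz)).trans <|
      mul_le_mul_of_nonneg_left (norm_sub_le_of_mem_segment hz) ((norm_nonneg _).trans (hM c hc))
  have hmean := (convex_segment c y).norm_image_sub_le_of_norm_hasDerivWithin_le hderiv hbound
    (left_mem_segment ℝ c y) (right_mem_segment ℝ c y)
  simpa [sub_right_comm, sq, mul_assoc] using hmean

lemma norm_image_combo_sub_combo_image_le_of_second_deriv_le (hs : Convex ℝ s)
    (hf : ∀ y ∈ s, HasDerivWithinAt f (f' y) s y)
    (hf' : ∀ y ∈ s, HasDerivWithinAt f' (f'' y) s y) (hM : ∀ y ∈ s, ‖f'' y‖ ≤ M)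
    {a b p q : ℝ} (ha : a ∈ s) (hb : b ∈ s) (hp : 0 ≤ p) (hq : 0 ≤ q) (hpq : p + q = 1) :
    ‖f (p * a + q * b) - (p • f a + q • f b)‖ ≤ M * ‖b - a‖ ^ 2 := by
  set c := p * a + q * b with hc
  have hcs : c ∈ s := hs ha hb hp hq hpq
  have hcseg : c ∈ segment ℝ a b := ⟨p, q, hp, hq, hpq, rfl⟩
  have hM0 : 0 ≤ M := (norm_nonneg _).trans (hM a ha)
  have htaylor (y : ℝ) (hy : y ∈ s) (hyc : ‖c - y‖ ≤ ‖b - a‖) :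
      f y - f c - (y - c) • f' c ∈ Metric.closedBall 0 (M * ‖b - a‖ ^ 2) := by
    rw [mem_closedBall_zero_iff]
    refine (norm_image_sub_sub_smul_deriv_le_of_second_deriv_le hs hf hf' hM hcs hy).trans ?_
    rw [norm_sub_rev y c]
    gcongr
  have hta := htaylor a ha (norm_sub_le_of_mem_segment hcseg)
  have htb := htaylor b hb
    (norm_sub_rev b a ▸ norm_sub_le_of_mem_segment (segment_symm ℝ a b ▸ hcseg))
  -- The first-order terms cancel because `p * (a - c) + q * (b - c) = 0`.
  have hcancel : f c - (p • f a + q • f b) =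
      -(p • (f a - f c - (a - c) • f' c) + q • (f b - f c - (b - c) • f' c)) := by
    obtain rfl : p = 1 - q := eq_sub_of_add_eq hpq
    rw [hc]
    module
  rw [hcancel, norm_neg, ← mem_closedBall_zero_iff]
  exact convex_closedBall 0 _ hta htb hp hq hpq

end Interpolation

lemma hasDerivAt_ofReal_cpow_const_of_pos (r : ℂ) {y : ℝ} (hy : 0 < y) :
    HasDerivAt (fun y : ℝ ↦ (y : ℂ) ^ r) (r * (y : ℂ) ^ (r - 1)) y := by
  simpa using ((hasDerivAt_id (y : ℂ)).cpow_const (c := r) (Or.inl (by simpa using hy))).comp_ofReal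

lemma norm_cpow_combo_sub_combo_cpow_le {r : ℂ} (hr : r.re ≤ 2) {a b p q : ℝ} (ha : 0 < a)
    (hab : a ≤ b) (hp : 0 ≤ p) (hq : 0 ≤ q) (hpq : p + q = 1) :
    ‖((p * a + q * b : ℝ) : ℂ) ^ r - (p * (a : ℂ) ^ r + q * (b : ℂ) ^ r)‖ ≤
      ‖r‖ * ‖r - 1‖ * a ^ (r.re - 2) * (b - a) ^ 2 := by
  have hpos : ∀ y ∈ Icc a b, 0 < y := fun y hy ↦ ha.trans_le hy.1
  have hbound : ∀ y ∈ Icc a b,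
      ‖r * ((r - 1) * (y : ℂ) ^ (r - 1 - 1))‖ ≤ ‖r‖ * ‖r - 1‖ * a ^ (r.re - 2) := by
    intro y hy
    have hre : (r - 1 - 1).re = r.re - 2 := by simp only [Complex.sub_re, Complex.one_re]; ring
    rw [norm_mul, norm_mul, ← mul_assoc, Complex.norm_cpow_eq_rpow_re_of_pos (hpos y hy), hre]
    exact mul_le_mul_of_nonneg_left (Real.rpow_le_rpow_of_nonpos ha hy.1 (by linarith))
      (by positivity)
  simpa using norm_image_combo_sub_combo_image_le_of_second_deriv_le (convex_Icc a b)
    (fun y hy ↦ (hasDerivAt_ofReal_cpow_const_of_pos r (hpos y hy)).hasDerivWithinAt)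
    (fun y hy ↦ ((hasDerivAt_ofReal_cpow_const_of_pos (r - 1) (hpos y hy)).const_mul
      r).hasDerivWithinAt)
    hbound (left_mem_Icc.mpr hab) (right_mem_Icc.mpr hab) hp hq hpq

lemma hasDerivAt_const_cpow_neg {c : ℂ} (hc : c ≠ 0) (s : ℂ) :
    HasDerivAt (fun z ↦ c ^ (-z)) (-(c ^ (-s) * Complex.log c)) s := by
  simpa using (hasDerivAt_neg s).const_cpow (Or.inl hc)

lemma hasSum_deriv_of_summableLocallyUniformlyOn {ι E : Type*} [NormedAddCommGroup E]
    [NormedSpace ℂ E] [CompleteSpace E] {F : ι → ℂ → E} {U : Set ℂ} (hU : IsOpen U)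
    (hF : ∀ i, DifferentiableOn ℂ (F i) U) (hsum : SummableLocallyUniformlyOn F U) {z : ℂ}
    (hz : z ∈ U) :
    HasSum (fun i ↦ deriv (F i) z) (deriv (fun w ↦ ∑' i, F i w) z) := by
  have hlim := hasSumLocallyUniformlyOn_iff_tendstoLocallyUniformlyOn.mp
    hsum.hasSumLocallyUniformlyOn
  have hderiv := (hlim.deriv (.of_forall fun t ↦ DifferentiableOn.fun_sum fun i _ ↦ hF i)
    hU).tendsto_at hz
  refine hderiv.congr fun t ↦ ?_
  exact deriv_fun_sum fun i _ ↦ (hF i).differentiableAt (hU.mem_nhds hz)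

lemma sum_range_log_interp (x : ℝ) (N : ℕ) :
    ∑ n ∈ Finset.range N, ((1 - x) * Real.log (n + 1) + x * Real.log (n + 2)) =
      Real.log N.factorial + x * Real.log (N + 1) := by
  induction N with
  | zero => simp
  | succ k ih =>
    rw [Finset.sum_range_succ, ih, Nat.factorial_succ]
    push_cast
    rw [Real.log_mul (by positivity) (by positivity), add_assoc (k : ℝ) 1 1, one_add_one_eq_two]
    ring

lemma tendsto_sum_log_interp_error {x : ℝ} (hx : -1 < x) :
    Tendsto (fun N ↦ ∑ n ∈ Finset.range N,
        ((1 - x) * Real.log (n + 1) + x * Real.log (n + 2) - Real.log (n + 1 + x)))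
      atTop (𝓝 (Real.log (Real.Gamma (x + 1)))) := by
  have hratio (k : ℝ) : Tendsto (fun N : ℕ ↦ Real.log (N + k) - Real.log N) atTop (𝓝 0) :=
    (Real.tendsto_log_comp_add_sub_log k).comp tendsto_natCast_atTop_atTop
  have hlim := (Real.BohrMollerup.tendsto_log_gamma (neg_lt_iff_pos_add.mp hx)).add
    ((hratio 1).add ((hratio 2).const_mul x))
  simp only [mul_zero, add_zero] at hlim
  have hshift (m : ℕ) : (m + 1 + x : ℝ) = x + 1 + m := by ring
  refine (tendsto_add_atTop_iff_nat 1).mp (hlim.congr fun N ↦ ?_)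
  simp_rw [hshift]
  rw [Finset.sum_sub_distrib, sum_range_log_interp, Real.BohrMollerup.logGammaSeq,
    Nat.factorial_succ]
  push_cast
  rw [Real.log_mul (by positivity) (by positivity), add_assoc (N : ℝ) 1 1, one_add_one_eq_two]
  ring

/-- The error made at `n + 1 + x` by the linear interpolation of `y ↦ y ^ (-s)` between `n + 1` and
`n + 2`. -/
noncomputable def cpowInterpError (x : ℝ) (n : ℕ) (s : ℂ) : ℂ :=
  (n + 1 + x : ℂ) ^ (-s) - ((1 - x) * (n + 1 : ℂ) ^ (-s) + x * (n + 2 : ℂ) ^ (-s))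

lemma hasDerivAt_cpowInterpError {x : ℝ} (hx : -1 < x) (n : ℕ) (s : ℂ) :
    HasDerivAt (cpowInterpError x n)
      (-((n + 1 + x : ℂ) ^ (-s) * Complex.log (n + 1 + x)) -
        ((1 - x) * -((n + 1 : ℂ) ^ (-s) * Complex.log (n + 1)) +
          x * -((n + 2 : ℂ) ^ (-s) * Complex.log (n + 2)))) s := by
  have hne : (n + 1 + x : ℂ) ≠ 0 := by
    exact_mod_cast (by linarith [n.cast_nonneg (α := ℝ)] : 0 < (n + 1 + x : ℝ)).ne'
  exact (hasDerivAt_const_cpow_neg hne s).sub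
    (((hasDerivAt_const_cpow_neg n.cast_add_one_ne_zero s).const_mul _).add
      ((hasDerivAt_const_cpow_neg (by exact_mod_cast (n + 1).succ_ne_zero) s).const_mul _))

lemma deriv_cpowInterpError_zero {x : ℝ} (hx : -1 < x) (n : ℕ) :
    deriv (cpowInterpError x n) 0 =
      ((1 - x) * Real.log (n + 1) + x * Real.log (n + 2) - Real.log (n + 1 + x) : ℝ) := by
  rw [(hasDerivAt_cpowInterpError hx n 0).deriv]
  push_cast [Complex.ofReal_log (by linarith [n.cast_nonneg (α := ℝ)] : 0 ≤ (n + 1 + x : ℝ)),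
    Complex.ofReal_log (by positivity : 0 ≤ (n + 1 : ℝ)),
    Complex.ofReal_log (by positivity : 0 ≤ (n + 2 : ℝ))]
  simp only [neg_zero, Complex.cpow_zero]
  ring

lemma norm_cpowInterpError_le {x : ℝ} (hx : x ∈ Icc 0 1) (n : ℕ) {s : ℂ} (hs : -2 ≤ s.re) :
    ‖cpowInterpError x n s‖ ≤ ‖s‖ * ‖s + 1‖ * (n + 1 : ℝ) ^ (-s.re - 2) := by
  have h := norm_cpow_combo_sub_combo_cpow_le (r := -s) (a := n + 1) (b := n + 2) (p := 1 - x)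
    (by simpa using neg_le.mp hs) n.cast_add_one_pos (by linarith) (sub_nonneg.mpr hx.2) hx.1
    (sub_add_cancel 1 x)
  have hpoint : (1 - x) * (n + 1) + x * (n + 2) = n + 1 + x := by ring
  have hstep : (n + 2 - (n + 1) : ℝ) = 1 := by ring
  rw [hpoint, hstep, norm_neg, ← neg_add', norm_neg] at h
  simpa [cpowInterpError] using h

lemma summableLocallyUniformlyOn_cpowInterpError {x : ℝ} (hx : x ∈ Icc 0 1) :
    SummableLocallyUniformlyOn (cpowInterpError x) {s | -1 < s.re} := by
  refine SummableLocallyUniformlyOn_of_locally_bounded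
    (isOpen_lt continuous_const Complex.continuous_re) fun K hK hKc ↦ ?_
  rcases K.eq_empty_or_nonempty with rfl | hne
  · exact ⟨0, summable_zero, by simp⟩
  obtain ⟨z, hzK, hz⟩ := hKc.exists_isMinOn hne Complex.continuous_re.continuousOn
  obtain ⟨C, hC⟩ := hKc.exists_bound_of_continuousOn (f := fun s : ℂ ↦ s * (s + 1)) (by fun_prop)
  have hz1 : -1 < z.re := hK hzK
  refine ⟨fun n ↦ C * ((n + 1 : ℕ) : ℝ) ^ (-z.re - 2), ?_, fun n s hs ↦ ?_⟩
  · exact ((summable_nat_add_iff 1).mpr (Real.summable_nat_rpow.mpr (by linarith))).mul_left C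
  · have hzs : z.re ≤ s.re := hz hs
    push_cast
    calc ‖cpowInterpError x n s‖ ≤ ‖s‖ * ‖s + 1‖ * (n + 1 : ℝ) ^ (-s.re - 2) :=
          norm_cpowInterpError_le hx n (by linarith)
      _ ≤ C * (n + 1 : ℝ) ^ (-z.re - 2) := by
          rw [← norm_mul]
          gcongr
          · exact (norm_nonneg _).trans (hC s hs)
          · exact hC s hs
          · linarith [n.cast_nonneg (α := ℝ)]

lemma differentiableOn_tsum_cpowInterpError {x : ℝ} (hx : x ∈ Icc 0 1) :
    DifferentiableOn ℂ (fun s ↦ ∑' n, cpowInterpError x n s) {s | -1 < s.re} :=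
  (summableLocallyUniformlyOn_cpowInterpError hx).differentiableOn
    (isOpen_lt continuous_const Complex.continuous_re) fun n s _ ↦
      (hasDerivAt_cpowInterpError (by linarith [hx.1]) n s).differentiableAt

lemma deriv_tsum_cpowInterpError_zero {x : ℝ} (hx : x ∈ Icc 0 1) :
    deriv (fun s ↦ ∑' n, cpowInterpError x n s) 0 = Real.log (Real.Gamma (x + 1)) := by
  have hx' : -1 < x := by linarith [hx.1]
  have hsum := hasSum_deriv_of_summableLocallyUniformlyOn
    (isOpen_lt continuous_const Complex.continuous_re)
    (fun n s _ ↦ (hasDerivAt_cpowInterpError hx' n s).differentiableAt.differentiableWithinAt)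
    (summableLocallyUniformlyOn_cpowInterpError hx) (z := 0) (by simp)
  refine tendsto_nhds_unique hsum.tendsto_sum_nat ?_
  simp_rw [deriv_cpowInterpError_zero hx', ← Complex.ofReal_sum]
  exact (Complex.continuous_ofReal.tendsto _).comp (tendsto_sum_log_interp_error hx')

lemma hasSum_cpowInterpError {x : ℝ} (hx : x ∈ Icc 0 1) {s : ℂ} (hs : 1 < s.re) :
    HasSum (fun n ↦ cpowInterpError x n s)
      (hurwitzZeta (x : UnitAddCircle) s - riemannZeta s - ((x : ℂ) ^ (-s) - x)) := by
  have hx' := (hasSum_nat_add_iff' 1).mpr (hasSum_hurwitzZeta_of_one_lt_re hx hs)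
  have h1 := hasSum_hurwitzZeta_of_one_lt_re (a := 1) (right_mem_Icc.mpr zero_le_one) hs
  rw [show ((1 : ℝ) : UnitAddCircle) = 0 from AddCircle.coe_period 1, hurwitzZeta_zero] at h1
  have h2 := (hasSum_nat_add_iff' 1).mpr h1
  convert! hx'.sub ((h1.mul_left (1 - x : ℂ)).add (h2.mul_left (x : ℂ))) using 1
  · ext n
    simp only [cpowInterpError, Complex.cpow_neg, one_div]
    push_cast
    rw [add_assoc (n : ℂ) 1 1, one_add_one_eq_two]
  · simp only [Complex.cpow_neg, Finset.sum_range_one, Nat.cast_zero, zero_add, Complex.ofReal_one,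
      Complex.one_cpow, one_div, inv_one]
    ring

theorem hurwitzZeta_sub_riemannZeta_eq_tsum {x : ℝ} (hx0 : 0 < x) (hx1 : x ≤ 1) {s : ℂ}
    (hs : -1 < s.re) :
    hurwitzZeta (x : UnitAddCircle) s - riemannZeta s =
      (x : ℂ) ^ (-s) - x + ∑' n, cpowInterpError x n s := by
  have hx : x ∈ Icc 0 1 := ⟨hx0.le, hx1⟩
  have hopen : IsOpen {s : ℂ | -1 < s.re} := isOpen_lt continuous_const Complex.continuous_re
  have hleft : DifferentiableOn ℂ (fun s ↦ hurwitzZeta (x : UnitAddCircle) s - riemannZeta s)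
      {s | -1 < s.re} := by
    simpa only [hurwitzZeta_zero] using
      (differentiable_hurwitzZeta_sub_hurwitzZeta x 0).differentiableOn
  have hx' : (x : ℂ) ≠ 0 := Complex.ofReal_ne_zero.mpr hx0.ne'
  have hcpow : Differentiable ℂ (fun s : ℂ ↦ (x : ℂ) ^ (-s) - x) := fun s ↦
    ((hasDerivAt_const_cpow_neg hx' s).sub_const _).differentiableAt
  have hright := hcpow.differentiableOn.add (differentiableOn_tsum_cpowInterpError hx)
  refine (hleft.analyticOnNhd hopen).eqOn_of_preconnected_of_eventuallyEq
    (hright.analyticOnNhd hopen) (convex_halfSpace_re_gt _).isPreconnected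
    (z₀ := 2) (by norm_num) ?_ hs
  have hnhds : {s : ℂ | 1 < s.re} ∈ 𝓝 2 :=
    (isOpen_lt continuous_const Complex.continuous_re).mem_nhds (by simp)
  filter_upwards [hnhds] with s hs
  simp [(hasSum_cpowInterpError hx hs).tsum_eq]

/-- Lerch's formula: `ζ'(0,x) = log Γ(x) - (1/2) log (2π)` for `0 < x ≤ 1`,
the derivative being with respect to `s`. -/
theorem hurwitzZeta_deriv_at_zero (x : ℝ) (hx0 : 0 < x) (hx1 : x ≤ 1) :
    deriv (fun s : ℂ => hurwitzZeta (↑x : UnitAddCircle) s) 0 =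
      Real.log (Real.Gamma x) - (1 / 2) * Real.log (2 * Real.pi) := by
  have hx : x ∈ Icc 0 1 := ⟨hx0.le, hx1⟩
  have hnhds : {s : ℂ | -1 < s.re} ∈ 𝓝 0 :=
    (isOpen_lt continuous_const Complex.continuous_re).mem_nhds (by simp)
  have hseries : (fun s ↦ hurwitzZeta (x : UnitAddCircle) s) =ᶠ[𝓝 0] fun s ↦
      (x : ℂ) ^ (-s) - x + ∑' n, cpowInterpError x n s + riemannZeta s := by
    filter_upwards [hnhds] with s hs
    rw [← hurwitzZeta_sub_riemannZeta_eq_tsum hx0 hx1 hs, sub_add_cancel]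
  have hcpow :=
    (hasDerivAt_const_cpow_neg (Complex.ofReal_ne_zero.mpr hx0.ne') 0).sub_const (x : ℂ)
  have htsum := ((differentiableOn_tsum_cpowInterpError hx).differentiableAt hnhds).hasDerivAt
  have hzeta := (differentiableAt_riemannZeta zero_ne_one).hasDerivAt
  rw [hseries.deriv_eq, ((hcpow.fun_add htsum).fun_add hzeta).deriv,
    deriv_tsum_cpowInterpError_zero hx, deriv_riemannZeta_zero, Real.Gamma_add_one hx0.ne',
    Real.log_mul hx0.ne' (Real.Gamma_pos_of_pos hx0).ne']
  push_cast [Complex.ofReal_log hx0.le, Complex.ofReal_log Real.two_pi_pos.le]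
  simp only [neg_zero, Complex.cpow_zero]
  ring
end

section
/- Let p > 7 be a prime. Assume Conjecture R_p: the real numbers log Γ(a/p) for 1 ≤ a ≤ p-1 are linearly independent over the field of algebraic numbers. Let f_1, …, f_r (r > 2) be Q̄-valued, odd, p-periodic functions with f̂_j(p) = 0 and L(1,f_j) ≠ 0, which are linearly independent over Q̄. Then at most three of the numbers L'(1,f_1), …, L'(1,f_r) are algebraic. -/
open Finset Filter Topology

/-!
Let `L(s, G)` be the entire continuation of `∑ G(n) n⁻ˢ`. Lerch's formula, that `ζ(s, x) - ζ(s)`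
has derivative `log Γ(x)` at `s = 0`, follows by differentiating termwise the series of errors in
linearly interpolating `t ↦ t⁻ˢ` between consecutive integers: it converges near `s = 0`, where
the derivatives of its partial sums are Gauss' approximations to `log Γ(x) + log x`. Combined with
the functional equation at `s = 1`, it gives for odd `F` modulo `N`
`L(0, 𝓕F) = -(iN/π) L(1, F)` and
`L'(1, F) = (log 2π + γ) L(1, F) - (πi/N) ∑ₐ 𝓕F(a) log Γ(a/N)`.

If `F` has algebraic values then so does `𝓕F`, and `L(0, 𝓕F) = -∑ₐ 𝓕F(a) a/N` is algebraic. When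
both `L(0, 𝓕F)` and `L'(1, F)` vanish, the second formula is a linear relation between the
`log Γ(a/N)`, so `𝓕F = 0` and `F = 0`. Hence linearly independent `F` with algebraic `L'(1, F)`
have linearly independent vectors `(L(0, 𝓕F), L'(1, F))` in the plane over the algebraic numbers,
and there are at most two of them.
-/

section LinearInterpolation

variable {E : Type*} [NormedAddCommGroup E] [NormedSpace ℝ E]

lemma norm_linear_interpolation_error_le {f f' : ℝ → E} {K x : ℝ}
    (hf : ∀ t ∈ Set.Icc (0 : ℝ) 1, HasDerivWithinAt f (f' t) (Set.Icc 0 1) t)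
    (hK : ∀ t ∈ Set.Icc (0 : ℝ) 1, ‖f' t - f' 0‖ ≤ K) (hx : x ∈ Set.Icc (0 : ℝ) 1) :
    ‖f x - f 0 - x • (f 1 - f 0)‖ ≤ 2 * K := by
  have tangent_error : ∀ t ∈ Set.Icc (0 : ℝ) 1, ‖f t - f 0 - t • f' 0‖ ≤ K * t := by
    intro t ht
    have mean_value := (convex_Icc (0 : ℝ) 1).norm_image_sub_le_of_norm_hasDerivWithin_le
      (x := 0) (f := fun t ↦ f t - t • f' 0) (fun u hu ↦ (hf u hu).sub
        (((hasDerivAt_id u).smul_const (f' 0)).hasDerivWithinAt.congr_deriv (one_smul ℝ _)))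
      hK (by simp) ht
    simpa [sub_right_comm, abs_of_nonneg ht.1] using mean_value
  have K_nonneg : 0 ≤ K := (norm_nonneg _).trans (hK 0 (by simp))
  calc ‖f x - f 0 - x • (f 1 - f 0)‖
      = ‖(f x - f 0 - x • f' 0) - x • (f 1 - f 0 - (1 : ℝ) • f' 0)‖ := by
        congr 1; module
    _ ≤ K * x + x * (K * 1) := by
        refine norm_sub_le_of_le (tangent_error x hx) ?_
        rw [norm_smul, Real.norm_of_nonneg hx.1]
        exact mul_le_mul_of_nonneg_left (tangent_error 1 (by simp)) hx.1
    _ ≤ 2 * K := by nlinarith [hx.2]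

end LinearInterpolation

section HurwitzZeta

open Complex HurwitzZeta

lemma hasDerivAt_ofReal_add_cpow {y t : ℝ} (hyt : 0 < y + t) (e : ℂ) :
    HasDerivAt (fun t : ℝ ↦ ((y : ℂ) + t) ^ e) (e * ((y : ℂ) + t) ^ (e - 1)) t := by
  have h : HasDerivAt (fun z : ℂ ↦ ((y : ℂ) + z) ^ e) (e * ((y : ℂ) + t) ^ (e - 1) * 1) t :=
    ((hasDerivAt_id (t : ℂ)).const_add (y : ℂ)).cpow_const (.inl (by simpa using hyt))
  simpa using h.comp_ofReal

lemma norm_cpow_interpolation_error_le {x y : ℝ} (hx : x ∈ Set.Icc (0 : ℝ) 1) (hy : 0 < y) {s : ℂ}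
    (hs : -2 ≤ s.re) :
    ‖((y : ℂ) + x) ^ (-s) - (y : ℂ) ^ (-s) - x * (((y : ℂ) + 1) ^ (-s) - (y : ℂ) ^ (-s))‖ ≤
      2 * (‖s‖ * ‖s + 1‖ * y ^ (-s.re - 2)) := by
  set K : ℝ := ‖s‖ * ‖s + 1‖ * y ^ (-s.re - 2)
  have second_deriv_le : ∀ t ∈ Set.Icc (0 : ℝ) 1,
      ‖-s * ((-s - 1) * ((y : ℂ) + t) ^ (-s - 1 - 1))‖ ≤ K := by
    intro t ht
    have hyt : 0 < y + t := add_pos_of_pos_of_nonneg hy ht.1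
    rw [norm_mul, norm_mul, norm_neg, ← neg_add', norm_neg, ← ofReal_add,
      norm_cpow_eq_rpow_re_of_pos hyt, ← mul_assoc]
    refine mul_le_mul_of_nonneg_left ?_ (by positivity)
    have exponent : (-(s + 1) - 1).re = -s.re - 2 := by
      simp only [sub_re, neg_re, add_re, one_re]; ring
    rw [exponent]
    exact Real.rpow_le_rpow_of_nonpos hy (by linarith [ht.1]) (by linarith)
  have deriv_sub_le : ∀ t ∈ Set.Icc (0 : ℝ) 1,
      ‖-s * ((y : ℂ) + t) ^ (-s - 1) - -s * ((y : ℂ) + (0 : ℝ)) ^ (-s - 1)‖ ≤ K := by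
    intro t ht
    have K_nonneg : 0 ≤ K := by positivity
    refine ((convex_Icc (0 : ℝ) 1).norm_image_sub_le_of_norm_hasDerivWithin_le
      (f := fun t : ℝ ↦ -s * ((y : ℂ) + t) ^ (-s - 1))
      (fun u hu ↦ ((hasDerivAt_ofReal_add_cpow (by linarith [hu.1])
        _).const_mul _).hasDerivWithinAt)
      second_deriv_le (by simp) ht).trans ?_
    rw [sub_zero, Real.norm_of_nonneg ht.1]
    exact mul_le_of_le_one_right K_nonneg ht.2
  simpa using norm_linear_interpolation_error_le (f := fun t : ℝ ↦ ((y : ℂ) + t) ^ (-s))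
    (fun t ht ↦ (hasDerivAt_ofReal_add_cpow (by linarith [ht.1]) _).hasDerivWithinAt)
    deriv_sub_le hx

/-- The error made by interpolating `t ↦ t ^ (-s)` linearly between `m + 1` and `m + 2`, at the
point `m + 1 + x`. -/
noncomputable def cpowInterpolationError (x : ℝ) (m : ℕ) (s : ℂ) : ℂ :=
  ((m : ℂ) + 1 + x) ^ (-s) - ((m : ℂ) + 1) ^ (-s) -
    x * (((m : ℂ) + 2) ^ (-s) - ((m : ℂ) + 1) ^ (-s))

lemma hasDerivAt_cpowInterpolationError {x : ℝ} (hx : 0 ≤ x) (m : ℕ) (s : ℂ) :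
    HasDerivAt (cpowInterpolationError x m)
      (((m : ℂ) + 1) ^ (-s) * log (m + 1) - ((m : ℂ) + 1 + x) ^ (-s) * log (m + 1 + x) -
        x * (((m : ℂ) + 1) ^ (-s) * log (m + 1) - ((m : ℂ) + 2) ^ (-s) * log (m + 2))) s := by
  have hasDerivAt_cpow_neg {y : ℝ} (hy : 0 < y) :
      HasDerivAt (fun s : ℂ ↦ (y : ℂ) ^ (-s)) (-((y : ℂ) ^ (-s) * log y)) s := by
    simpa using (hasDerivAt_neg s).const_cpow (.inl (ofReal_ne_zero.2 hy.ne'))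
  have left := hasDerivAt_cpow_neg (y := m + 1) (by positivity)
  have right := hasDerivAt_cpow_neg (y := m + 2) (by positivity)
  have middle := hasDerivAt_cpow_neg (y := m + 1 + x) (by positivity)
  push_cast at left right middle
  exact ((middle.sub left).sub ((right.sub left).const_mul (x : ℂ))).congr_deriv (by ring)

lemma differentiable_cpowInterpolationError {x : ℝ} (hx : 0 ≤ x) (m : ℕ) :
    Differentiable ℂ (cpowInterpolationError x m) := fun s ↦
  (hasDerivAt_cpowInterpolationError hx m s).differentiableAt

lemma deriv_cpowInterpolationError_zero {x : ℝ} (hx : 0 ≤ x) (m : ℕ) :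
    deriv (cpowInterpolationError x m) 0 =
      (Real.log (m + 1) - Real.log (x + (m + 1)) +
        x * (Real.log (m + 1 + 1) - Real.log (m + 1)) : ℝ) := by
  have h₂ : (m : ℂ) + 2 = m + 1 + 1 := by ring
  rw [(hasDerivAt_cpowInterpolationError hx m 0).deriv, h₂]
  push_cast [ofReal_log (by positivity : (0 : ℝ) ≤ m + 1),
    ofReal_log (by positivity : (0 : ℝ) ≤ m + 1 + 1),
    ofReal_log (by positivity : (0 : ℝ) ≤ x + (m + 1)), neg_zero, cpow_zero]
  ring_nf

-- The ball contains `0` as well as `2`, around which the Dirichlet series converge.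
lemma norm_cpowInterpolationError_le {x : ℝ} (hx : x ∈ Set.Icc (0 : ℝ) 1) (m : ℕ) {s : ℂ}
    (hs : s ∈ Metric.ball (1 : ℂ) (3 / 2)) :
    ‖cpowInterpolationError x m s‖ ≤ 18 * ((m : ℝ) + 1) ^ (-(3 / 2) : ℝ) := by
  rw [mem_ball_iff_norm] at hs
  have re_gt : -(1 / 2) < s.re := by
    have := (abs_lt.1 ((abs_re_le_norm (s - 1)).trans_lt hs)).1
    rw [sub_re, one_re] at this
    linarith
  have norm_le : ‖s‖ ≤ 5 / 2 := by
    calc ‖s‖ = ‖s - 1 + 1‖ := by rw [sub_add_cancel]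
      _ ≤ 3 / 2 + 1 := norm_add_le_of_le hs.le norm_one.le
      _ = 5 / 2 := by norm_num
  have norm_add_one_le : ‖s + 1‖ ≤ 7 / 2 :=
    (norm_add_le_of_le norm_le norm_one.le).trans (by norm_num)
  have rpow_le : ((m : ℝ) + 1) ^ (-s.re - 2) ≤ ((m : ℝ) + 1) ^ (-(3 / 2) : ℝ) :=
    Real.rpow_le_rpow_of_exponent_le (by simp) (by linarith)
  calc ‖cpowInterpolationError x m s‖
      ≤ 2 * (‖s‖ * ‖s + 1‖ * ((m : ℝ) + 1) ^ (-s.re - 2)) := by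
        have h₂ : (m : ℂ) + 1 + 1 = m + 2 := by ring
        have error_le := norm_cpow_interpolation_error_le hx (y := m + 1) (by positivity) (s := s)
          (by linarith)
        push_cast at error_le
        rwa [h₂] at error_le
    _ ≤ 2 * (5 / 2 * (7 / 2) * ((m : ℝ) + 1) ^ (-(3 / 2) : ℝ)) := by gcongr
    _ ≤ 18 * ((m : ℝ) + 1) ^ (-(3 / 2) : ℝ) := by
        rw [← mul_assoc]; gcongr; norm_num

lemma summable_add_one_rpow_neg_three_halves :
    Summable fun m : ℕ ↦ ((m : ℝ) + 1) ^ (-(3 / 2) : ℝ) := by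
  exact_mod_cast (summable_nat_add_iff 1).2
    (Real.summable_nat_rpow.2 (by norm_num : (-(3 / 2) : ℝ) < -1))

lemma hasSum_cpowInterpolationError {x : ℝ} (hx : x ∈ Set.Icc (0 : ℝ) 1) {s : ℂ} (hs : 1 < s.re) :
    HasSum (cpowInterpolationError x · s)
      (hurwitzZeta x s - riemannZeta s - (x : ℂ) ^ (-s) + x) := by
  have hs₀ : -s ≠ 0 := neg_ne_zero.2 (ne_zero_of_one_lt_re hs)
  have hasSum_shift {y : ℝ} (hy : y ∈ Set.Icc (0 : ℝ) 1) :
      HasSum (fun m : ℕ ↦ ((m : ℂ) + 1 + y) ^ (-s)) (hurwitzZeta y s - (y : ℂ) ^ (-s)) := by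
    simpa [cpow_neg] using
      (hasSum_nat_add_iff' 1).2 (hasSum_hurwitzZeta_of_one_lt_re hy hs)
  have hζ₁ : HasSum (fun m : ℕ ↦ ((m : ℂ) + 1) ^ (-s)) (riemannZeta s) := by
    simpa [hs₀, hurwitzZeta_zero] using hasSum_shift (y := 0) (by simp)
  have hζ₂ : HasSum (fun m : ℕ ↦ ((m : ℂ) + 2) ^ (-s)) (riemannZeta s - 1) := by
    have coe_one : ((1 : ℝ) : UnitAddCircle) = 0 := AddCircle.coe_period 1
    simpa [coe_one, hurwitzZeta_zero, add_assoc, one_add_one_eq_two] using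
      hasSum_shift (y := 1) (by simp)
  have hsum := ((hasSum_shift hx).sub hζ₁).sub ((hζ₂.sub hζ₁).mul_left (x : ℂ))
  have sum_eq : hurwitzZeta x s - (x : ℂ) ^ (-s) - riemannZeta s -
      x * (riemannZeta s - 1 - riemannZeta s) =
        hurwitzZeta x s - riemannZeta s - (x : ℂ) ^ (-s) + x := by ring
  rwa [sum_eq] at hsum

lemma hurwitzZeta_sub_riemannZeta_eq_tsum_s14 {x : ℝ} (hx : x ∈ Set.Ioc (0 : ℝ) 1) :
    Set.EqOn (fun s ↦ hurwitzZeta x s - riemannZeta s)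
      (fun s ↦ (x : ℂ) ^ (-s) - x + ∑' m, cpowInterpolationError x m s)
      (Metric.ball (1 : ℂ) (3 / 2)) := by
  have hx' := Set.Ioc_subset_Icc_self hx
  have analytic_left : AnalyticOnNhd ℂ (fun s ↦ hurwitzZeta x s - riemannZeta s)
      (Metric.ball (1 : ℂ) (3 / 2)) := by
    rw [← hurwitzZeta_zero]
    exact (differentiable_hurwitzZeta_sub_hurwitzZeta x 0).differentiableOn.analyticOnNhd
      Metric.isOpen_ball
  have analytic_right : AnalyticOnNhd ℂ
      (fun s ↦ (x : ℂ) ^ (-s) - x + ∑' m, cpowInterpolationError x m s)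
      (Metric.ball (1 : ℂ) (3 / 2)) := by
    refine DifferentiableOn.analyticOnNhd (.add ?_ ?_) Metric.isOpen_ball
    · have : (x : ℂ) ≠ 0 := ofReal_ne_zero.2 hx.1.ne'
      fun_prop (disch := simp [this])
    · exact differentiableOn_tsum_of_summable_norm
        (summable_add_one_rpow_neg_three_halves.mul_left 18)
        (fun m ↦ (differentiable_cpowInterpolationError hx'.1 m).differentiableOn)
        Metric.isOpen_ball fun m s ↦ norm_cpowInterpolationError_le hx' m
  refine analytic_left.eqOn_of_preconnected_of_eventuallyEq analytic_right
    (convex_ball _ _).isPreconnected (z₀ := 2) (by norm_num [Complex.dist_eq]) ?_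
  filter_upwards [(continuous_re.isOpen_preimage _ isOpen_Ioi).mem_nhds
    (show (1 : ℝ) < re 2 by simp)] with s hs
  rw [(hasSum_cpowInterpolationError hx' hs).tsum_eq]
  ring

lemma tendsto_sum_deriv_cpowInterpolationError_zero {x : ℝ} (hx : 0 < x) :
    Tendsto (fun n ↦ ∑ m ∈ range n, deriv (cpowInterpolationError x m) 0) atTop
      (𝓝 (Real.log (Real.Gamma x) + Real.log x : ℝ)) := by
  have partial_sum (n : ℕ) : ∑ m ∈ range n, deriv (cpowInterpolationError x m) 0 =
      (Real.BohrMollerup.logGammaSeq x n + Real.log x +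
        x * (Real.log (n + 1) - Real.log n) : ℝ) := by
    have telescope : ∑ m ∈ range n, (Real.log (m + 1 + 1) - Real.log (m + 1)) =
        Real.log (n + 1) := by
      simpa using sum_range_sub (fun m : ℕ ↦ Real.log (m + 1)) n
    have log_factorial : ∑ m ∈ range n, Real.log (m + 1) = Real.log n.factorial := by
      rw [← prod_range_add_one_eq_factorial, Nat.cast_prod, Real.log_prod (by intros; positivity)]
      simp
    simp_rw [deriv_cpowInterpolationError_zero hx.le]
    rw [← ofReal_sum, sum_add_distrib, sum_sub_distrib, ← mul_sum, telescope, log_factorial,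
      Real.BohrMollerup.logGammaSeq, sum_range_succ']
    push_cast
    ring_nf
  simp_rw [partial_sum]
  refine (continuous_ofReal.tendsto _).comp ?_
  simpa using ((Real.BohrMollerup.tendsto_log_gamma hx).add_const (Real.log x)).add
    (Real.tendsto_log_nat_add_one_sub_log.const_mul x)

lemma zero_mem_ball_one : (0 : ℂ) ∈ Metric.ball (1 : ℂ) (3 / 2) := by
  norm_num [Complex.dist_eq]

theorem hurwitzZeta_sub_riemannZeta_zero {x : ℝ} (hx : x ∈ Set.Ioc (0 : ℝ) 1) :
    hurwitzZeta x 0 - riemannZeta 0 = 1 - x := by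
  simpa [cpowInterpolationError] using hurwitzZeta_sub_riemannZeta_eq_tsum_s14 hx zero_mem_ball_one

lemma hasDerivAt_tsum_cpowInterpolationError_zero {x : ℝ} (hx : x ∈ Set.Ioc (0 : ℝ) 1) :
    HasDerivAt (fun s ↦ ∑' m, cpowInterpolationError x m s)
      (Real.log (Real.Gamma x) + Real.log x : ℝ) 0 := by
  have hx' := Set.Ioc_subset_Icc_self hx
  have differentiable_term (m : ℕ) :
      DifferentiableOn ℂ (cpowInterpolationError x m) (Metric.ball (1 : ℂ) (3 / 2)) :=
    (differentiable_cpowInterpolationError hx'.1 m).differentiableOn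
  have summable_bound := summable_add_one_rpow_neg_three_halves.mul_left 18
  have term_bound (m : ℕ) (s : ℂ) := norm_cpowInterpolationError_le hx' m (s := s)
  have differentiable_sum := differentiableOn_tsum_of_summable_norm summable_bound
    differentiable_term Metric.isOpen_ball term_bound
  have hasSum_deriv := hasSum_deriv_of_summable_norm summable_bound differentiable_term
    Metric.isOpen_ball term_bound zero_mem_ball_one
  rw [← tendsto_nhds_unique hasSum_deriv.tendsto_sum_nat
    (tendsto_sum_deriv_cpowInterpolationError_zero hx.1)]
  exact (differentiable_sum.differentiableAt
    (Metric.isOpen_ball.mem_nhds zero_mem_ball_one)).hasDerivAt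

/-- Lerch's formula. -/
theorem hasDerivAt_hurwitzZeta_sub_riemannZeta_zero {x : ℝ} (hx : x ∈ Set.Ioc (0 : ℝ) 1) :
    HasDerivAt (fun s ↦ hurwitzZeta x s - riemannZeta s) (Real.log (Real.Gamma x)) 0 := by
  have hasDerivAt_cpow : HasDerivAt (fun s : ℂ ↦ (x : ℂ) ^ (-s) - x) (-Real.log x) 0 := by
    simpa [ofReal_log hx.1.le] using
      ((hasDerivAt_neg (0 : ℂ)).const_cpow (.inl (ofReal_ne_zero.2 hx.1.ne'))).sub_const (x : ℂ)
  refine ((hasDerivAt_cpow.add (hasDerivAt_tsum_cpowInterpolationError_zero hx)).congr_deriv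
    ?_).congr_of_eventuallyEq ((hurwitzZeta_sub_riemannZeta_eq_tsum_s14 hx).eventuallyEq_of_mem
      (Metric.isOpen_ball.mem_nhds zero_mem_ball_one))
  push_cast
  ring

end HurwitzZeta

section LFunction

open Complex HurwitzZeta ZMod

variable {N : ℕ} [NeZero N]

lemma val_div_mem_Ioc {a : ZMod N} (ha : a ≠ 0) : (a.val / N : ℝ) ∈ Set.Ioc (0 : ℝ) 1 := by
  have val_pos : 0 < a.val := Nat.pos_of_ne_zero ((val_ne_zero a).2 ha)
  have N_pos : (0 : ℝ) < N := Nat.cast_pos.2 (NeZero.pos N)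
  exact ⟨by positivity, (div_le_one N_pos).2 (Nat.cast_le.2 (val_lt a).le)⟩

lemma LFunction_eq_sum_hurwitzZeta_sub_riemannZeta {G : ZMod N → ℂ} (hG : ∑ a, G a = 0) (s : ℂ) :
    LFunction G s =
      N ^ (-s) * ∑ a, G a * (hurwitzZeta (a.val / N : ℝ) s - riemannZeta s) := by
  simp only [LFunction, toAddCircle_apply, mul_sub, sum_sub_distrib, ← sum_mul, hG, zero_mul,
    sub_zero]

lemma LFunction_apply_zero {G : ZMod N → ℂ} (hG₀ : G 0 = 0) (hG : ∑ a, G a = 0) :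
    LFunction G 0 = -∑ a, G a * (a.val / N) := by
  have term (a : ZMod N) :
      G a * (hurwitzZeta (a.val / N : ℝ) 0 - riemannZeta 0) = G a - G a * (a.val / N) := by
    obtain rfl | ha := eq_or_ne a 0
    · simp [hG₀]
    · rw [hurwitzZeta_sub_riemannZeta_zero (val_div_mem_Ioc ha)]
      push_cast
      ring
  rw [LFunction_eq_sum_hurwitzZeta_sub_riemannZeta hG, neg_zero, cpow_zero, one_mul,
    sum_congr rfl fun a _ ↦ term a, sum_sub_distrib, hG, zero_sub]

lemma hasDerivAt_LFunction_zero {G : ZMod N → ℂ} (hG₀ : G 0 = 0) (hG : ∑ a, G a = 0) :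
    HasDerivAt (LFunction G)
      (∑ a, G a * Real.log (Real.Gamma (a.val / N)) - log N * LFunction G 0) 0 := by
  have term (a : ZMod N) :
      HasDerivAt (fun s ↦ G a * (hurwitzZeta (a.val / N : ℝ) s - riemannZeta s))
        (G a * Real.log (Real.Gamma (a.val / N))) 0 := by
    obtain rfl | ha := eq_or_ne a 0
    · simpa [hG₀] using hasDerivAt_const (0 : ℂ) (0 : ℂ)
    · exact (hasDerivAt_hurwitzZeta_sub_riemannZeta_zero (val_div_mem_Ioc ha)).const_mul (G a)
  have conductor_factor : HasDerivAt (fun s : ℂ ↦ (N : ℂ) ^ (-s)) (-log N) 0 := by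
    simpa using (hasDerivAt_neg (0 : ℂ)).const_cpow (.inl (NeZero.ne (N : ℂ)))
  simp only [funext (LFunction_eq_sum_hurwitzZeta_sub_riemannZeta hG)]
  refine (conductor_factor.mul (HasDerivAt.fun_sum fun a _ ↦ term a)).congr_deriv ?_
  simp only [neg_zero, cpow_zero]
  ring

lemma LFunction_smul (c : ℂ) (F : ZMod N → ℂ) (s : ℂ) :
    LFunction (c • F) s = c * LFunction F s := by
  simp only [LFunction, Pi.smul_apply, smul_eq_mul, mul_assoc, mul_left_comm _ c, mul_sum]

lemma LFunction_dft_one_sub {F : ZMod N → ℂ} (hF : F.Odd) {s : ℂ} (hs : ∀ n : ℕ, s ≠ -n) :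
    LFunction (dft F) (1 - s) =
      -(2 * I) * (N ^ s * (2 * Real.pi) ^ (-s) * Gamma s * sin (Real.pi * s / 2)) *
        LFunction F s := by
  have dft_dft_eq : dft (dft F) = -(N : ℂ) • F := by
    ext a; simp [dft_dft, hF a]
  have dft_dft_neg_eq : dft (fun a ↦ dft F (-a)) = (N : ℂ) • F := by
    ext a; simp [dft_comp_neg, dft_dft_eq, hF a]
  have N_cpow : (N : ℂ) ^ (s - 1) * N = N ^ s := by
    rw [cpow_sub _ _ (NeZero.ne (N : ℂ)), cpow_one, div_mul_cancel₀ _ (NeZero.ne (N : ℂ))]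
  have two_I_mul_sin : 2 * I * sin (Real.pi * s / 2) =
      cexp (Real.pi * I * s / 2) - cexp (-Real.pi * I * s / 2) := by
    rw [mul_right_comm, two_sin, mul_assoc, I_mul_I]
    ring_nf
  rw [LFunction_one_sub _ hs (.inl (dft_odd_iff.2 hF).map_zero), dft_dft_eq, dft_dft_neg_eq,
    LFunction_smul, LFunction_smul, ← N_cpow]
  linear_combination
    N ^ (s - 1) * N * (2 * Real.pi) ^ (-s) * Gamma s * LFunction F s * two_I_mul_sin

lemma ne_neg_natCast_of_re_pos {s : ℂ} (hs : 0 < s.re) (n : ℕ) : s ≠ -n := by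
  rintro rfl
  exact hs.not_ge (by simp)

lemma LFunction_dft_zero {F : ZMod N → ℂ} (hF : F.Odd) :
    LFunction (dft F) 0 = -(N * I / Real.pi) * LFunction F 1 := by
  have functional_eq := LFunction_dft_one_sub hF (ne_neg_natCast_of_re_pos (s := 1) (by simp))
  rw [sub_self, cpow_one, cpow_neg_one, Gamma_one, mul_one, mul_one, sin_pi_div_two]
    at functional_eq
  rw [functional_eq, mul_inv]
  ring

lemma hasDerivAt_gammaFactor_one :
    HasDerivAt (fun s : ℂ ↦ N ^ s * (2 * Real.pi) ^ (-s) * Gamma s * sin (Real.pi * s / 2))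
      (N / (2 * Real.pi) * (log N - log (2 * Real.pi) - Real.eulerMascheroniConstant)) 1 := by
  have two_pi_ne_zero : (2 * Real.pi : ℂ) ≠ 0 := by simp [Real.pi_ne_zero]
  have N_cpow : HasDerivAt (fun s : ℂ ↦ (N : ℂ) ^ s) (N * log N) 1 := by
    simpa using (hasDerivAt_id (1 : ℂ)).const_cpow (.inl (NeZero.ne (N : ℂ)))
  have two_pi_cpow : HasDerivAt (fun s : ℂ ↦ (2 * Real.pi : ℂ) ^ (-s))
      (-(2 * Real.pi : ℂ)⁻¹ * log (2 * Real.pi)) 1 :=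
    ((hasDerivAt_neg (1 : ℂ)).const_cpow (.inl two_pi_ne_zero)).congr_deriv
      (by rw [cpow_neg_one]; ring)
  have sin_half : HasDerivAt (fun s : ℂ ↦ sin (Real.pi * s / 2)) 0 1 := by
    simpa [cos_pi_div_two] using
      (((hasDerivAt_id (1 : ℂ)).const_mul (Real.pi : ℂ)).div_const 2).csin
  refine (((N_cpow.mul two_pi_cpow).mul hasDerivAt_Gamma_one).mul sin_half).congr_deriv ?_
  simp only [mul_one, cpow_one, cpow_neg_one, Gamma_one, sin_pi_div_two, Pi.mul_apply]
  ring

theorem deriv_LFunction_one {F : ZMod N → ℂ} (hF : F.Odd) :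
    deriv (LFunction F) 1 =
      (log (2 * Real.pi) + Real.eulerMascheroniConstant) * LFunction F 1 -
        Real.pi * I / N * ∑ a, dft F a * Real.log (Real.Gamma (a.val / N)) := by
  have dft_odd : (dft F).Odd := dft_odd_iff.2 hF
  have deriv_right := (hasDerivAt_gammaFactor_one (N := N)).const_mul (-(2 * I)) |>.mul
    (differentiable_LFunction_of_sum_zero hF.sum_eq_zero 1).hasDerivAt
  have deriv_left := HasDerivAt.comp_const_sub (1 : ℂ) 1
    (by rw [sub_self]; exact hasDerivAt_LFunction_zero dft_odd.map_zero dft_odd.sum_eq_zero)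
  have functional_eq : (fun s ↦ LFunction (dft F) (1 - s)) =ᶠ[𝓝 1] fun s ↦
      -(2 * I) * (N ^ s * (2 * Real.pi) ^ (-s) * Gamma s * sin (Real.pi * s / 2)) *
        LFunction F s := by
    filter_upwards [(continuous_re.isOpen_preimage _ isOpen_Ioi).mem_nhds
      (show (0 : ℝ) < re 1 by simp)] with s hs
    exact LFunction_dft_one_sub hF (ne_neg_natCast_of_re_pos hs)
  have deriv_eq := deriv_left.unique (deriv_right.congr_of_eventuallyEq functional_eq)
  simp only [LFunction_dft_zero hF, cpow_one, cpow_neg_one, Gamma_one, mul_one, sin_pi_div_two,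
    mul_inv] at deriv_eq
  have mul_eq_neg_one : Real.pi * I / N * (N * I / Real.pi) = -1 := by
    have N_ne_zero := NeZero.ne (N : ℂ)
    have pi_ne_zero : (Real.pi : ℂ) ≠ 0 := ofReal_ne_zero.2 Real.pi_ne_zero
    field_simp
    exact I_sq
  linear_combination -(Real.pi * I / N) * deriv_eq + (deriv (LFunction F) 1 -
    (log (2 * Real.pi) + Real.eulerMascheroniConstant) * LFunction F 1) * mul_eq_neg_one

lemma LFunction_sum_smul {ι : Type*} [Fintype ι] (c : ι → ℂ) (F : ι → ZMod N → ℂ) (s : ℂ) :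
    LFunction (∑ j, c j • F j) s = ∑ j, c j * LFunction (F j) s := by
  simp only [LFunction, Finset.sum_apply, Pi.smul_apply, smul_eq_mul, sum_mul, mul_sum]
  rw [sum_comm]
  exact sum_congr rfl fun j _ ↦ sum_congr rfl fun a _ ↦ by ring

lemma eq_LFunction_of_eq_tsum {F : ZMod N → ℂ} (hF : ∑ a, F a = 0) {L : ℂ → ℂ}
    (hL : Differentiable ℂ L)
    (hLser : ∀ s : ℂ, 1 < s.re → L s = ∑' n : ℕ, F (n + 1) / ((n : ℂ) + 1) ^ s) :
    L = LFunction F := by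
  refine AnalyticOnNhd.eq_of_eventuallyEq (z₀ := 2)
    (hL.differentiableOn.analyticOnNhd isOpen_univ)
    ((differentiable_LFunction_of_sum_zero hF).differentiableOn.analyticOnNhd isOpen_univ) ?_
  filter_upwards [(continuous_re.isOpen_preimage _ isOpen_Ioi).mem_nhds
    (show (1 : ℝ) < re 2 by simp)] with s hs
  rw [hLser s hs, LFunction_eq_LSeries _ hs, LSeries,
    (LSeriesSummable_of_one_lt_re F hs).tsum_eq_zero_add, LSeries.term_zero, zero_add]
  exact tsum_congr fun n ↦ by rw [LSeries.term_of_ne_zero n.succ_ne_zero]; push_cast; rfl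

end LFunction

section Algebraicity

lemma isAlgebraic_sum {K A ι : Type*} [Field K] [Field A] [Algebra K A] {s : Finset ι} {g : ι → A}
    (hg : ∀ i ∈ s, IsAlgebraic K (g i)) : IsAlgebraic K (∑ i ∈ s, g i) :=
  mem_algebraicClosure_iff.1 (sum_mem fun i hi ↦ mem_algebraicClosure_iff.2 (hg i hi))

open ZMod

variable {N : ℕ} [NeZero N]

lemma isAlgebraic_stdAddChar (a : ZMod N) : IsAlgebraic ℚ (stdAddChar a : ℂ) := by
  refine .of_pow (NeZero.pos N) ?_
  rw [← AddChar.map_nsmul_eq_pow, nsmul_eq_mul, CharP.cast_eq_zero, zero_mul,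
    AddChar.map_zero_eq_one]
  exact isAlgebraic_one

lemma isAlgebraic_dft {F : ZMod N → ℂ} (hF : ∀ a, IsAlgebraic ℚ (F a)) (a : ZMod N) :
    IsAlgebraic ℚ (dft F a) := by
  rw [dft_apply]
  exact isAlgebraic_sum fun b _ ↦ (isAlgebraic_stdAddChar _).mul (hF b)

lemma isAlgebraic_LFunction_dft_zero {F : ZMod N → ℂ} (hF : F.Odd)
    (halg : ∀ a, IsAlgebraic ℚ (F a)) : IsAlgebraic ℚ (LFunction (dft F) 0) := by
  have dft_odd : (dft F).Odd := dft_odd_iff.2 hF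
  rw [LFunction_apply_zero dft_odd.map_zero dft_odd.sum_eq_zero]
  exact (isAlgebraic_sum fun a _ ↦ (isAlgebraic_dft halg a).mul
    ((isAlgebraic_natCast _).mul (isAlgebraic_natCast _).inv)).neg

end Algebraicity

section Independence

open ZMod

/-- Conjecture `R_N` restricted to odd coefficient families: the values `log Γ(a/N)` satisfy no
nontrivial linear relation over the algebraic numbers whose coefficients are odd in `a mod N`. An
odd family vanishes at `a = 0`, where `Real.log (Real.Gamma 0)` has the junk value `0`. -/
def OddLogGammaIndependent (N : ℕ) [NeZero N] : Prop :=
  ∀ c : ZMod N → ℂ, c.Odd → (∀ a, IsAlgebraic ℚ (c a)) →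
    ∑ a, c a * (Real.log (Real.Gamma (a.val / N)) : ℂ) = 0 → c = 0

variable {N : ℕ} [NeZero N]

lemma oddLogGammaIndependent_of_forall_Icc
    (hconj : ∀ c : ℕ → ℂ, (∀ a, IsAlgebraic ℚ (c a)) →
      (∑ a ∈ Icc 1 (N - 1), c a * (Real.log (Real.Gamma ((a : ℝ) / N)) : ℂ)) = 0 →
      ∀ a ∈ Icc 1 (N - 1), c a = 0) : OddLogGammaIndependent N := by
  intro c c_odd c_alg sum_eq_zero
  have c_zero : c 0 = 0 := c_odd.map_zero
  have val_mem_Icc {a : ZMod N} (ha : a ≠ 0) : a.val ∈ Icc 1 (N - 1) :=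
    mem_Icc.2 ⟨Nat.pos_of_ne_zero ((val_ne_zero a).2 ha), Nat.le_sub_one_of_lt a.val_lt⟩
  have val_natCast_of_mem {a : ℕ} (ha : a ∈ Icc 1 (N - 1)) : (a : ZMod N).val = a :=
    val_cast_of_lt ((mem_Icc.1 ha).2.trans_lt (Nat.sub_one_lt (NeZero.ne N)))
  have coeff_eq_zero := hconj (fun a ↦ c a) (fun a ↦ c_alg a) <| by
    rw [← sum_eq_zero]
    refine sum_bij_ne_zero (fun a _ _ ↦ (a : ZMod N)) (fun _ _ _ ↦ mem_univ _)
      (fun a ha _ b hb _ hab ↦ ?_) (fun b _ hb ↦ ?_) (fun a ha _ ↦ by rw [val_natCast_of_mem ha])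
    · rw [← val_natCast_of_mem ha, hab, val_natCast_of_mem hb]
    · have b_ne_zero : b ≠ 0 := by rintro rfl; simp [c_zero] at hb
      exact ⟨b.val, val_mem_Icc b_ne_zero, by simpa using hb, natCast_zmod_val b⟩
  funext a
  obtain rfl | ha := eq_or_ne a 0
  · exact c_zero
  · simpa using coeff_eq_zero a.val (val_mem_Icc ha)

lemma eq_zero_of_LFunction_dft_zero_eq_zero_of_deriv_eq_zero (hN : OddLogGammaIndependent N)
    {F : ZMod N → ℂ} (hF : F.Odd) (halg : ∀ a, IsAlgebraic ℚ (F a))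
    (hL₀ : LFunction (dft F) 0 = 0) (hL₁ : deriv (LFunction F) 1 = 0) : F = 0 := by
  have factor_ne_zero : (Real.pi * Complex.I / N : ℂ) ≠ 0 :=
    div_ne_zero (mul_ne_zero (Complex.ofReal_ne_zero.2 Real.pi_ne_zero) Complex.I_ne_zero)
      (NeZero.ne (N : ℂ))
  have LFunction_one : LFunction F 1 = 0 := by
    refine (mul_eq_zero.1 ((LFunction_dft_zero hF).symm.trans hL₀)).resolve_left ?_
    simp [NeZero.ne N, Real.pi_ne_zero]
  rw [deriv_LFunction_one hF, LFunction_one, mul_zero, zero_sub, neg_eq_zero] at hL₁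
  exact dft.map_eq_zero_iff.1 <| hN (dft F) (dft_odd_iff.2 hF) (isAlgebraic_dft halg)
    ((mul_eq_zero.1 hL₁).resolve_left factor_ne_zero)

theorem card_le_two_of_isAlgebraic_deriv_LFunction_one (hN : OddLogGammaIndependent N)
    {ι : Type*} [Fintype ι] {F : ι → ZMod N → ℂ} (hodd : ∀ j, (F j).Odd)
    (halg : ∀ j a, IsAlgebraic ℚ (F j a)) (hindep : LinearIndependent (algebraicClosure ℚ ℂ) F)
    (hderiv : ∀ j, IsAlgebraic ℚ (deriv (LFunction (F j)) 1)) : Fintype.card ι ≤ 2 := by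
  let K := algebraicClosure ℚ ℂ
  let specialValues (j : ι) : K × K :=
    (⟨LFunction (dft (F j)) 0,
      mem_algebraicClosure_iff.2 (isAlgebraic_LFunction_dft_zero (hodd j) (halg j))⟩,
     ⟨deriv (LFunction (F j)) 1, mem_algebraicClosure_iff.2 (hderiv j)⟩)
  suffices specialValues_indep : LinearIndependent K specialValues by
    simpa using specialValues_indep.fintype_card_le_finrank
  refine Fintype.linearIndependent_iff.2 fun c hc ↦ Fintype.linearIndependent_iff.1 hindep c ?_
  have L₀_relation : ∑ j, (c j : ℂ) * LFunction (dft (F j)) 0 = 0 := by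
    simpa [Prod.fst_sum, specialValues] using congrArg (fun v : K × K ↦ (v.1 : ℂ)) hc
  have L₁_relation : ∑ j, (c j : ℂ) * deriv (LFunction (F j)) 1 = 0 := by
    simpa [Prod.snd_sum, specialValues] using congrArg (fun v : K × K ↦ (v.2 : ℂ)) hc
  change ∑ j, (c j : ℂ) • F j = 0
  refine eq_zero_of_LFunction_dft_zero_eq_zero_of_deriv_eq_zero hN ?_ ?_ ?_ ?_
  · intro a
    simp [Finset.sum_apply, fun j ↦ hodd j a]
  · intro a
    rw [Finset.sum_apply]
    exact isAlgebraic_sum fun j _ ↦ (mem_algebraicClosure_iff.1 (c j).2).mul (halg j a)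
  · simp only [map_sum, _root_.map_smul, LFunction_sum_smul, L₀_relation]
  · rw [funext (LFunction_sum_smul _ F), ← L₁_relation]
    exact (HasDerivAt.fun_sum fun j _ ↦ (differentiable_LFunction_of_sum_zero
      (hodd j).sum_eq_zero 1).hasDerivAt.const_mul _).deriv

lemma exists_zmod_eq_of_periodic {α : Type*} {f : ℤ → α} (hf : Function.Periodic f (N : ℤ)) :
    ∃ F : ZMod N → α, ∀ n : ℤ, F n = f n := by
  refine ⟨fun a ↦ f a.val, fun n ↦ ?_⟩
  simp only [val_intCast, Int.emod_def, mul_comm (N : ℤ)]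
  exact hf.sub_zsmul_eq (n / N)

end Independence

theorem at_most_three_algebraic_derivs_general {N : ℕ} [NeZero N] (hN : OddLogGammaIndependent N)
    {ι : Type*} [Fintype ι] (f : ι → ℤ → ℂ)
    (halg : ∀ j (n : ℤ), IsAlgebraic ℚ (f j n))
    (hper : ∀ j (n : ℤ), f j (n + N) = f j n)
    (hodd : ∀ j (n : ℤ), f j (N - n) = -f j n)
    (hindep : ∀ α : ι → ℂ, (∀ j, IsAlgebraic ℚ (α j)) →
      (∀ n : ℤ, ∑ j, α j * f j n = 0) → ∀ j, α j = 0)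
    (L : ι → ℂ → ℂ)
    (hLdiff : ∀ j, Differentiable ℂ (L j))
    (hLser : ∀ j (s : ℂ), 1 < s.re → L j s = ∑' n : ℕ, f j (n + 1) / ((n : ℂ) + 1) ^ s) :
    {j | IsAlgebraic ℚ (deriv (L j) 1)}.ncard ≤ 2 := by
  classical
  choose F hF using fun j ↦ exists_zmod_eq_of_periodic (hper j)
  have F_alg (j : ι) (a : ZMod N) : IsAlgebraic ℚ (F j a) := by
    obtain ⟨n, rfl⟩ := ZMod.intCast_surjective a
    exact hF j n ▸ halg j n
  have F_odd (j : ι) : (F j).Odd := fun a ↦ by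
    obtain ⟨n, rfl⟩ := ZMod.intCast_surjective a
    rw [hF, ← hodd, ← hF]
    simp
  have F_indep : LinearIndependent (algebraicClosure ℚ ℂ) F :=
    Fintype.linearIndependent_iff.2 fun c hc j ↦ Subtype.ext <|
      hindep (fun j ↦ c j) (fun j ↦ mem_algebraicClosure_iff.1 (c j).2)
        (fun n ↦ by simpa [hF, IntermediateField.smul_def] using congrFun hc n) j
  have L_eq (j : ι) : L j = ZMod.LFunction (F j) :=
    eq_LFunction_of_eq_tsum (F_odd j).sum_eq_zero (hLdiff j) fun s hs ↦ by
      rw [hLser j s hs]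
      exact tsum_congr fun n ↦ by rw [← hF]; push_cast; rfl
  rw [← Nat.card_coe_set_eq, Nat.card_eq_fintype_card]
  exact card_le_two_of_isAlgebraic_deriv_LFunction_one hN (fun j ↦ F_odd j) (fun j ↦ F_alg j)
    (F_indep.comp _ Subtype.val_injective) fun j ↦ L_eq j ▸ j.2

/-- Theorem 1: let `p > 7` be prime, assume the Q̄-linear independence of
`{log Γ(a/p) : 1 ≤ a ≤ p-1}`, and let `f_1, …, f_r` (`r > 2`) be Q̄-valued, odd,
`p`-periodic, Q̄-linearly independent functions with `∑_{a=1}^p f_j a = 0` and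
`L(1,f_j) ≠ 0`. Then at most three of `L'(1,f_1), …, L'(1,f_r)` are algebraic. -/
theorem at_most_three_algebraic_derivs (p : ℕ) (hp : p.Prime) (hp7 : 7 < p)
    (hconj : ∀ c : ℕ → ℂ, (∀ a, IsAlgebraic ℚ (c a)) →
      (∑ a ∈ Finset.Icc 1 (p - 1),
        c a * (Real.log (Real.Gamma ((a : ℝ) / p)) : ℂ)) = 0 →
      ∀ a ∈ Finset.Icc 1 (p - 1), c a = 0)
    (r : ℕ) (hr : 2 < r)
    (f : Fin r → ℤ → ℂ)
    (halg : ∀ j (n : ℤ), IsAlgebraic ℚ (f j n))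
    (hper : ∀ j (n : ℤ), f j (n + p) = f j n)
    (hodd : ∀ j (n : ℤ), f j (p - n) = -f j n)
    (hsum : ∀ j, ∑ a ∈ Finset.Icc 1 p, f j a = 0)
    (hindep : ∀ α : Fin r → ℂ, (∀ j, IsAlgebraic ℚ (α j)) →
      (∀ n : ℤ, ∑ j, α j * f j n = 0) → ∀ j, α j = 0)
    (L : Fin r → ℂ → ℂ)
    (hLdiff : ∀ j, Differentiable ℂ (L j))
    (hLser : ∀ j (s : ℂ), 1 < s.re → L j s = ∑' n : ℕ, f j (n + 1) / ((n : ℂ) + 1) ^ s)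
    (hLone : ∀ j, L j 1 ≠ 0) :
    {j : Fin r | IsAlgebraic ℚ (deriv (L j) 1)}.ncard ≤ 3 := by
  have : NeZero p := ⟨hp.ne_zero⟩
  exact (at_most_three_algebraic_derivs_general (oddLogGammaIndependent_of_forall_Icc hconj)
    f halg hper hodd hindep L hLdiff hLser).trans (by norm_num)
end
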